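/- For all integers N ≥ 0 and ℓ with 2|ℓ| + 4 > N, the number of strongly concave compositions of N + |ℓ|(|ℓ|+1)/2 with rank ℓ equals the number of integer partitions of N; that is, V_d(ℓ, N + |ℓ|(|ℓ|+1)/2) = p(N). -/

import Mathlib

open scoped BigOperators

/-- `IsSCC n l k` says that the list `l = (a_1, ..., a_s)` of nonnegative integers
is a strongly concave composition of `n` with central part at (1-indexed) position `k`:
`a_1 > a_2 > ... > a_{k-1} > a_k < a_{k+1} < ... < a_s` and `a_1 + ... + a_s = n`. -/
def IsSCC (n : ℕ) (l : List ℕ) (k : ℕ) : Prop :=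
  1 ≤ k ∧ k ≤ l.length ∧ l.sum = n ∧
  (∀ i j : Fin l.length, (i : ℕ) < j → (j : ℕ) < k → l.get j < l.get i) ∧
  (∀ i j : Fin l.length, k - 1 ≤ (i : ℕ) → (i : ℕ) < j → l.get i < l.get j)

/-- The rank `s - 2k + 1` of a strongly concave composition with `s` parts and
central part at position `k`. -/
def sccRank (l : List ℕ) (k : ℕ) : ℤ := (l.length : ℤ) - 2 * k + 1

/-- `Vd m n` is the number of strongly concave compositions of `n` with rank `m`. -/
noncomputable def Vd (m : ℤ) (n : ℕ) : ℕ :=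
  Set.ncard {p : List ℕ × ℕ | IsSCC n p.1 p.2 ∧ sccRank p.1 p.2 = m}

/-- `VdTotal n` is the total number of strongly concave compositions of `n`. -/
noncomputable def VdTotal (n : ℕ) : ℕ :=
  Set.ncard {p : List ℕ × ℕ | IsSCC n p.1 p.2}

/-- The partition function, extended by `0` to negative integers. -/
def partitionCount (k : ℤ) : ℕ :=
  if 0 ≤ k then Fintype.card (Nat.Partition k.toNat) else 0

/-!
Let `S` collect the parts of a strongly concave composition from the central one on, and `L` the
parts to its left. Rank `m` means `#S - #L = m + 1`, and concavity means that some element of `S`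
is smaller than every element of `L`. View `(S, L)` as a Maya diagram: particles at the
nonnegative sites `S` and at all negative sites outside `-L`, with charge `#S - #L` and energy
`∑ S + ∑ L`. Below the bound on `N` there is too little energy to violate the concavity condition,
so all Maya diagrams of charge `m + 1` are counted.

Translating a Maya diagram by one site raises its charge `q` by one and its energy by `q`, so the
number of diagrams of charge `q` and energy `N + q(q-1)/2` does not depend on `q`. For `q = N`
there is no energy left for a hole: the diagram is a set of `N` nonnegative integers, and
subtracting the staircase `0, 1, 2, …` from its increasing enumeration gives the partitions of `N`.
-/

section

open Finset

lemma isSCC_iff_sorted {n : ℕ} {l : List ℕ} {k : ℕ} :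
    IsSCC n l k ↔ 1 ≤ k ∧ k ≤ l.length ∧ l.sum = n ∧
      (l.take k).SortedGT ∧ (l.drop (k - 1)).SortedLT := by
  unfold IsSCC
  rw [List.sortedGT_iff_pairwise, List.sortedLT_iff_pairwise, List.pairwise_iff_getElem,
    List.pairwise_iff_getElem]
  refine and_congr_right fun hk => and_congr_right fun hkl => and_congr_right fun _ =>
    and_congr ⟨fun h i j hi hj hij => ?_, fun h i j hij hj => ?_⟩
      ⟨fun h i j hi hj hij => ?_, fun h i j hi hij => ?_⟩
  · rw [List.length_take] at hi hj
    simpa using h ⟨i, by omega⟩ ⟨j, by omega⟩ hij (show j < k by omega)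
  · have := h i j (by simp; omega) (by simp; omega) hij
    rwa [List.getElem_take, List.getElem_take] at this
  · rw [List.length_drop] at hi hj
    simpa using h ⟨k - 1 + i, by omega⟩ ⟨k - 1 + j, by omega⟩ (by simp) (by simpa)
  · have := h (i - (k - 1)) (j - (k - 1)) (by simp; omega) (by simp; omega) (by omega)
    simpa [Nat.add_sub_cancel' hi, Nat.add_sub_cancel' (hi.trans hij.le)] using this

lemma IsSCC.reverse {n : ℕ} {l : List ℕ} {k : ℕ} (h : IsSCC n l k) :
    IsSCC n l.reverse (l.length + 1 - k) := by
  rw [isSCC_iff_sorted] at h ⊢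
  obtain ⟨hk, hkl, hsum, hgt, hlt⟩ := h
  refine ⟨by omega, by rw [List.length_reverse]; omega, by rwa [List.sum_reverse], ?_, ?_⟩
  · rw [List.take_reverse, List.sortedGT_reverse,
      show l.length - (l.length + 1 - k) = k - 1 by omega]
    exact hlt
  · rw [List.drop_reverse, List.sortedLT_reverse,
      show l.length - (l.length + 1 - k - 1) = k by omega]
    exact hgt

lemma Vd_neg (m : ℤ) (n : ℕ) : Vd (-m) n = Vd m n := by
  let rev (p : List ℕ × ℕ) : List ℕ × ℕ := (p.1.reverse, p.1.length + 1 - p.2)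
  have rev_mem (r : ℤ) {p : List ℕ × ℕ} (hp : IsSCC n p.1 p.2 ∧ sccRank p.1 p.2 = r) :
      IsSCC n (rev p).1 (rev p).2 ∧ sccRank (rev p).1 (rev p).2 = -r := by
    have := hp.1.2.1
    refine ⟨hp.1.reverse, ?_⟩
    rw [← hp.2]
    simp only [rev, sccRank, List.length_reverse]
    omega
  have rev_rev {r : ℤ} {p : List ℕ × ℕ} (hp : IsSCC n p.1 p.2 ∧ sccRank p.1 p.2 = r) :
      rev (rev p) = p := by
    have := hp.1.2.1
    refine Prod.ext (List.reverse_reverse _) ?_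
    simp only [rev, List.length_reverse]
    omega
  exact Set.BijOn.ncard_eq (Set.InvOn.bijOn (f := rev) (f' := rev)
    ⟨fun p hp => rev_rev hp, fun p hp => rev_rev hp⟩
    (fun p hp => by simpa using rev_mem (-m) hp) fun p hp => rev_mem m hp)

lemma Vd_natAbs (m : ℤ) (n : ℕ) : Vd m.natAbs n = Vd m n := by
  rcases m.natAbs_eq with hm | hm
  · rw [← hm]
  · rw [← Vd_neg, ← hm]

lemma isSCC_append_iff {n : ℕ} {A B : List ℕ} :
    IsSCC n (A ++ B) (A.length + 1) ↔
      A.SortedGT ∧ B.SortedLT ∧ (∃ c ∈ B, ∀ x ∈ A, c < x) ∧ A.sum + B.sum = n := by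
  rw [isSCC_iff_sorted]
  cases B with
  | nil => simp
  | cons c B =>
    have head_le (hB : (c :: B).SortedLT) : ∀ b ∈ c :: B, c ≤ b := by
      simpa using fun b hb => (List.rel_of_pairwise_cons hB.pairwise hb).le
    simp only [List.sortedGT_iff_pairwise, List.take_length_add_append, List.take_one,
      List.head?_cons, Option.toList_some, List.pairwise_append, List.pairwise_singleton,
      List.mem_singleton, forall_eq, Nat.add_sub_cancel, List.drop_left, List.length_append,
      List.sum_append, List.length_cons]
    constructor
    · rintro ⟨-, -, hsum, ⟨hA, -, hlt⟩, hB⟩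
      exact ⟨hA, hB, ⟨c, List.mem_cons_self, hlt⟩, hsum⟩
    · rintro ⟨hA, hB, ⟨b, hb, hlt⟩, hsum⟩
      exact ⟨by omega, by omega, hsum,
        ⟨hA, trivial, fun x hx => (head_le hB b hb).trans_lt (hlt x hx)⟩, hB⟩

/-- The Maya diagrams of charge `q` and energy `E`: particles at the nonnegative sites `P.1` and
holes at the negative sites `-x` for `x ∈ P.2`, all other negative sites being filled. Energies are
measured relative to the diagram without nonnegative particles and holes. -/
def mayaDiagrams (q E : ℤ) : Set (Finset ℕ × Finset ℕ) :=
  {P | 0 ∉ P.2 ∧ (#P.1 : ℤ) - #P.2 = q ∧ ((∑ x ∈ P.1, x : ℕ) : ℤ) + (∑ x ∈ P.2, x : ℕ) = E}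

/-- The strongly concave compositions of `n` with rank `m` as pairs of sets: `P.1` holds the central
part and the parts to its right, `P.2` the parts to its left. -/
def concavePairs (m : ℤ) (n : ℕ) : Set (Finset ℕ × Finset ℕ) :=
  {P ∈ mayaDiagrams (m + 1) n | ∃ c ∈ P.1, ∀ x ∈ P.2, c < x}

lemma sum_sort_eq_sum {α : Type*} [AddCommMonoid α] (s : Finset α) (r : α → α → Prop)
    [DecidableRel r] [IsTrans α r] [Std.Antisymm r] [Std.Total r] :
    (s.sort r).sum = ∑ x ∈ s, x := by
  rw [← Multiset.sum_coe, sort_eq, sum_eq_multiset_sum, Multiset.map_id']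

/-- The list `x_r > … > x_1 > c < y_1 < … < y_s` together with the position of `c`, for
`P.1 = {c, y_1, …, y_s}` and `P.2 = {x_1, …, x_r}`. -/
def concaveOfPair (P : Finset ℕ × Finset ℕ) : List ℕ × ℕ :=
  (P.2.sort (· ≥ ·) ++ P.1.sort, #P.2 + 1)

lemma concaveOfPair_injective : Function.Injective concaveOfPair := by
  rintro ⟨S, L⟩ ⟨S', L'⟩ heq
  simp only [concaveOfPair, Prod.mk.injEq, Nat.add_right_cancel_iff] at heq
  obtain ⟨hL, hS⟩ := List.append_inj heq.1 (by simpa only [length_sort] using heq.2)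
  have hS := congrArg List.toFinset hS
  have hL := congrArg List.toFinset hL
  simp only [sort_toFinset] at hS hL
  rw [hS, hL]

lemma isSCC_concaveOfPair_iff {m : ℤ} {n : ℕ} {P : Finset ℕ × Finset ℕ} :
    IsSCC n (concaveOfPair P).1 (concaveOfPair P).2 ∧
        sccRank (concaveOfPair P).1 (concaveOfPair P).2 = m ↔
      P ∈ concavePairs m n := by
  obtain ⟨S, L⟩ := P
  have hscc := isSCC_append_iff (n := n) (A := L.sort (· ≥ ·)) (B := S.sort)
  simp only [length_sort, mem_sort, sum_sort_eq_sum, sortedGT_sort, sortedLT_sort,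
    true_and] at hscc
  simp only [concaveOfPair, hscc, sccRank, List.length_append, length_sort, concavePairs,
    mayaDiagrams, Set.mem_ofPred_eq]
  constructor
  · rintro ⟨⟨⟨c, hc, hlt⟩, hsum⟩, hrank⟩
    exact ⟨⟨fun h0 => Nat.not_lt_zero c (hlt 0 h0), by omega, by omega⟩, c, hc, hlt⟩
  · rintro ⟨⟨-, hcharge, henergy⟩, hlt⟩
    exact ⟨⟨hlt, by omega⟩, by omega⟩

lemma IsSCC.exists_concaveOfPair_eq {n : ℕ} {l : List ℕ} {k : ℕ} (h : IsSCC n l k) :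
    ∃ P, concaveOfPair P = (l, k) := by
  obtain ⟨A, B, rfl, rfl⟩ : ∃ A B, l = A ++ B ∧ k = A.length + 1 := by
    refine ⟨l.take (k - 1), l.drop (k - 1), (List.take_append_drop _ l).symm, ?_⟩
    rw [List.length_take]
    have := h.1
    have := h.2.1
    omega
  obtain ⟨hA, hB, -⟩ := isSCC_append_iff.1 h
  refine ⟨(B.toFinset, A.toFinset), ?_⟩
  simp only [concaveOfPair, (List.toFinset_sort _ hA.nodup).2 hA.sortedGE.pairwise,
    (List.toFinset_sort _ hB.nodup).2 hB.sortedLE.pairwise, List.toFinset_card_of_nodup hA.nodup]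

lemma Vd_eq_ncard_concavePairs (m : ℤ) (n : ℕ) : Vd m n = (concavePairs m n).ncard := by
  rw [Vd, ← Set.ncard_image_of_injective _ concaveOfPair_injective]
  congr 1
  ext p
  constructor
  · intro hp
    obtain ⟨P, hP⟩ := hp.1.exists_concaveOfPair_eq
    rw [← Prod.eta p, ← hP] at hp ⊢
    exact ⟨P, isSCC_concaveOfPair_iff.1 hp, rfl⟩
  · rintro ⟨P, hP, rfl⟩
    exact isSCC_concaveOfPair_iff.2 hP

lemma card_mul_le_two_mul_sum {S : Finset ℕ} {a : ℕ} (ha : ∀ x ∈ S, a ≤ x) :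
    (#S : ℤ) * (#S + 2 * a - 1) ≤ 2 * (∑ x ∈ S, x : ℕ) := by
  have h := sum_range_le_sum (s := S.map Nat.castEmbedding) (c := (a : ℤ)) (by simpa using ha)
  have gauss (k : ℕ) : 2 * ∑ i ∈ range k, ((a : ℤ) + i) = k * (k + 2 * a - 1) := by
    induction k with
    | zero => simp
    | succ k ih =>
      rw [sum_range_succ, mul_add, ih]
      push_cast
      ring
  rw [← gauss]
  simpa using h

-- A hole costs at least one unit of energy and forces `q + 1` particles, all at sites `≥ a`.
lemma le_two_mul_energy_of_hole {q E : ℤ} (hq : 0 ≤ q) {P : Finset ℕ × Finset ℕ}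
    (hP : P ∈ mayaDiagrams q E) (hhole : P.2.Nonempty) {a : ℕ} (ha : ∀ x ∈ P.1, a ≤ x) :
    (q + 1) * (q + 2 * a) + 2 ≤ 2 * E := by
  obtain ⟨S, L⟩ := P
  obtain ⟨h0, hcharge, henergy⟩ := hP
  obtain ⟨x, hx⟩ := hhole
  simp only at h0 hcharge henergy hx ha
  have hx_pos : 0 < x := Nat.pos_of_ne_zero fun hx0 => h0 (hx0 ▸ hx)
  have hx_le : x ≤ ∑ y ∈ L, y := single_le_sum (f := fun y => y) (fun _ _ => Nat.zero_le _) hx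
  have hcard : q + 1 ≤ #S := by
    have := card_pos.2 ⟨x, hx⟩
    omega
  have hsum : (q + 1) * (q + 2 * a) ≤ 2 * (∑ y ∈ S, y : ℕ) :=
    (mul_le_mul hcard (by omega) (by omega) (by omega)).trans (card_mul_le_two_mul_sum ha)
  omega

lemma concavePairs_eq_mayaDiagrams {m n : ℕ} (h : n < m * (m + 1) / 2 + (2 * m + 4)) :
    concavePairs m n = mayaDiagrams (m + 1) n := by
  refine Set.sep_eq_self_iff_mem_true.2 fun P hP => ?_
  by_contra! hno
  have hne : P.1.Nonempty := card_pos.1 (by have := hP.2.1; omega)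
  have holes_nonempty : P.2.Nonempty := (hno _ (P.1.min'_mem hne)).imp fun _ => And.left
  have one_le : ∀ c ∈ P.1, 1 ≤ c := by
    intro c hc
    obtain ⟨x, hx, hxc⟩ := hno c hc
    exact (Nat.one_le_iff_ne_zero.2 fun hx0 => hP.1 (hx0 ▸ hx)).trans hxc
  have henergy := le_two_mul_energy_of_hole (by omega) hP holes_nonempty one_le
  have htriangle : 2 * (m * (m + 1) / 2) = m * (m + 1) :=
    Nat.two_mul_div_two_of_even (Nat.even_mul_succ_self m)
  zify at h htriangle
  push_cast at henergy
  linarith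

/-- The translate of a Maya diagram by one site to the right: a filled site `-1` moves to `0`. -/
def mayaShift (P : Finset ℕ × Finset ℕ) : Finset ℕ × Finset ℕ :=
  (if 1 ∈ P.2 then P.1.map (addRightEmbedding 1) else insert 0 (P.1.map (addRightEmbedding 1)),
    (P.2.erase 1).image (· - 1))

/-- The translate of a Maya diagram by one site to the left: an empty site `0` moves to `-1`. -/
def mayaUnshift (P : Finset ℕ × Finset ℕ) : Finset ℕ × Finset ℕ :=
  ((P.1.erase 0).image (· - 1),
    if 0 ∈ P.1 then P.2.map (addRightEmbedding 1) else insert 1 (P.2.map (addRightEmbedding 1)))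

lemma map_succ_image_pred {S : Finset ℕ} (h : 0 ∉ S) :
    (S.image (· - 1)).map (addRightEmbedding 1) = S := by
  rw [map_eq_image, image_image]
  refine (image_congr fun x hx => ?_).trans image_id
  exact Nat.sub_add_cancel (Nat.pos_of_ne_zero fun h0 => h (h0 ▸ hx))

lemma image_pred_map_succ (S : Finset ℕ) :
    (S.map (addRightEmbedding 1)).image (· - 1) = S := by
  simp [map_eq_image, image_image, Function.comp_def]

lemma sum_map_succ (S : Finset ℕ) : ∑ x ∈ S.map (addRightEmbedding 1), x = ∑ x ∈ S, x + #S := by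
  simp [sum_add_distrib]

lemma mayaUnshift_mayaShift {P : Finset ℕ × Finset ℕ} (h0 : 0 ∉ P.2) :
    mayaUnshift (mayaShift P) = P := by
  by_cases h1 : 1 ∈ P.2
  · have hpred := map_succ_image_pred (S := P.2.erase 1) (by simp [h0])
    simp [mayaShift, mayaUnshift, h1, hpred, image_pred_map_succ]
  · have hpred := map_succ_image_pred h0
    simp [mayaShift, mayaUnshift, h1, hpred, image_pred_map_succ]

lemma mayaShift_mayaUnshift {P : Finset ℕ × Finset ℕ} (h0 : 0 ∉ P.2) :
    mayaShift (mayaUnshift P) = P := by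
  have hpred := map_succ_image_pred (S := P.1.erase 0) (by simp)
  by_cases h1 : 0 ∈ P.1
  · simp [mayaShift, mayaUnshift, h0, h1, hpred, image_pred_map_succ]
  · rw [erase_eq_of_notMem h1] at hpred
    have herase : (P.2.map (addRightEmbedding 1)).erase 1 = P.2.map (addRightEmbedding 1) :=
      erase_eq_of_notMem (by simpa using h0)
    simp [mayaShift, mayaUnshift, h1, hpred, herase, image_pred_map_succ]

lemma zero_notMem_snd_mayaUnshift (P : Finset ℕ × Finset ℕ) : 0 ∉ (mayaUnshift P).2 := by
  unfold mayaUnshift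
  split_ifs <;> simp

lemma mayaShift_mem_mayaDiagrams_iff {q E : ℤ} {P : Finset ℕ × Finset ℕ} (h0 : 0 ∉ P.2) :
    mayaShift P ∈ mayaDiagrams (q + 1) (E + q) ↔ P ∈ mayaDiagrams q E := by
  obtain ⟨S, L⟩ := P
  have hS := sum_map_succ S
  have hL := sum_map_succ ((L.erase 1).image (· - 1))
  have hcard := card_map (s := (L.erase 1).image (· - 1)) (addRightEmbedding 1)
  rw [map_succ_image_pred (by simpa using h0)] at hL hcard
  have hpos : 0 ∉ (L.erase 1).image (· - 1) := by
    simp only [mem_image, mem_erase, not_exists]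
    rintro x ⟨⟨hx1, hx⟩, hx0⟩
    have : x ≠ 0 := fun h => h0 (h ▸ hx)
    omega
  by_cases h1 : 1 ∈ L
  · have hsum_erase := add_sum_erase L id h1
    have hcard_erase := card_erase_add_one h1
    simp only [id] at hsum_erase
    simp only [mayaShift, mayaDiagrams, Set.mem_ofPred_eq, h1, if_true, h0, hpos, card_map,
      not_false_eq_true, true_and]
    omega
  · rw [erase_eq_of_notMem h1] at hL hcard hpos
    simp only [mayaShift, mayaDiagrams, Set.mem_ofPred_eq, h1, if_false, h0, hpos,
      erase_eq_of_notMem h1, not_false_eq_true, true_and]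
    rw [card_insert_of_notMem (by simp), sum_insert (by simp), card_map]
    omega

lemma ncard_mayaDiagrams_shift (q E : ℤ) :
    (mayaDiagrams (q + 1) (E + q)).ncard = (mayaDiagrams q E).ncard := by
  symm
  refine Set.BijOn.ncard_eq (f := mayaShift) (Set.InvOn.bijOn (f' := mayaUnshift)
    ⟨fun P hP => mayaUnshift_mayaShift hP.1, fun P hP => mayaShift_mayaUnshift hP.1⟩
    (fun P hP => (mayaShift_mem_mayaDiagrams_iff hP.1).2 hP) fun P hP => ?_)
  rw [← mayaShift_mem_mayaDiagrams_iff (zero_notMem_snd_mayaUnshift P), mayaShift_mayaUnshift hP.1]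
  exact hP

lemma snd_eq_empty_of_mem_mayaDiagrams {l N : ℕ} (hN : N ≤ l) {P : Finset ℕ × Finset ℕ}
    (hP : P ∈ mayaDiagrams l (N + l * (l - 1) / 2)) : P.2 = ∅ := by
  by_contra! hne
  have henergy := le_two_mul_energy_of_hole (by omega) hP hne (a := 0) fun _ _ => Nat.zero_le _
  have htriangle : 2 * ((l : ℤ) * (l - 1) / 2) = l * (l - 1) :=
    Int.two_mul_ediv_two_of_even (Int.even_mul_pred_self l)
  push_cast at henergy
  linarith

/-- The sets of `m` natural numbers whose sum exceeds that of the staircase `0, 1, …, m - 1`, the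
least possible one, by `N`. -/
def staircaseSets (m N : ℕ) : Set (Finset ℕ) :=
  {S | #S = m ∧ ∑ x ∈ S, x = N + ∑ i ∈ range m, i}

lemma ncard_mayaDiagrams_of_le {l N : ℕ} (hN : N ≤ l) :
    (mayaDiagrams l (N + l * (l - 1) / 2)).ncard = (staircaseSets l N).ncard := by
  have hstaircase : ((∑ i ∈ range l, i : ℕ) : ℤ) = l * (l - 1) / 2 := by
    rw [sum_range_id, Int.natCast_div, Nat.cast_mul]
    cases l <;> simp
  refine Set.BijOn.ncard_eq (f := Prod.fst)
    ⟨fun P hP => ?_, fun P hP P' hP' heq => ?_, fun S hS => ?_⟩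
  · obtain ⟨-, hcharge, henergy⟩ := id hP
    rw [snd_eq_empty_of_mem_mayaDiagrams hN hP] at hcharge henergy
    simp only [card_empty, sum_empty] at hcharge henergy
    exact ⟨by omega, by omega⟩
  · exact Prod.ext heq ((snd_eq_empty_of_mem_mayaDiagrams hN hP).trans
      (snd_eq_empty_of_mem_mayaDiagrams hN hP').symm)
  · refine ⟨(S, ∅), ⟨notMem_empty 0, ?_, ?_⟩, rfl⟩
    · simp [hS.1]
    · simp [hS.2, ← hstaircase]

lemma card_Ico_le_sub_of_strictMono {α : Type*} [LinearOrder α] [LocallyFiniteOrder α]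
    {g : α → ℕ} (hg : StrictMono g) (i j : α) : #(Ico i j) ≤ g j - g i := by
  rw [← Nat.card_Ico]
  refine card_le_card_of_injOn g (fun k hk => ?_) hg.injective.injOn
  rw [coe_Ico, Set.mem_Ico] at hk
  simp [hg.monotone hk.1, hg hk.2]

lemma ncard_staircaseSets (m N : ℕ) :
    (staircaseSets m N).ncard = {f : Fin m → ℕ | Monotone f ∧ ∑ i, f i = N}.ncard := by
  have add_strictMono {f : Fin m → ℕ} (hf : Monotone f) : StrictMono fun i => f i + i :=
    hf.add_strictMono Fin.val_strictMono
  symm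
  refine Set.BijOn.ncard_eq (f := fun f : Fin m → ℕ => univ.image fun i => f i + i) ⟨?_, ?_, ?_⟩
  · rintro f ⟨hf, hsum⟩
    refine ⟨?_, ?_⟩
    · rw [card_image_of_injective _ (add_strictMono hf).injective, card_univ, Fintype.card_fin]
    · rw [sum_image (add_strictMono hf).injective.injOn, sum_add_distrib, hsum, sum_range]
  · rintro f ⟨hf, -⟩ f' ⟨hf', -⟩ heq
    have hrange := congrArg ((↑) : Finset ℕ → Set ℕ) heq
    simp only [coe_image, coe_univ, Set.image_univ] at hrange
    exact add_right_cancel (b := fun i : Fin m => (i : ℕ))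
      (((add_strictMono hf).range_inj (add_strictMono hf')).1 hrange)
  · rintro S ⟨hcard, hsum⟩
    let g := S.orderEmbOfFin hcard
    have gap (i j : Fin m) : (j : ℕ) - i ≤ g j - g i := by
      simpa using card_Ico_le_sub_of_strictMono g.strictMono i j
    have le_g (i : Fin m) : (i : ℕ) ≤ g i := by
      have := gap ⟨0, i.pos⟩ i
      simp only at this
      omega
    have hg : (fun i : Fin m => g i - i + i) = g := funext fun i => Nat.sub_add_cancel (le_g i)
    have hS : univ.image g = S := S.image_orderEmbOfFin_univ hcard
    refine ⟨fun i => g i - i, ⟨fun i j hij => ?_, ?_⟩, ?_⟩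
    · have := gap i j
      have := le_g i
      have := g.monotone hij
      have : (i : ℕ) ≤ j := hij
      simp only
      omega
    · rw [sum_range, ← hS, sum_image g.injective.injOn, ← hg, sum_add_distrib] at hsum
      exact Nat.add_right_cancel hsum
    · simp only [hg, hS]

lemma ncard_monotone_sum_eq (m N : ℕ) :
    {f : Fin m → ℕ | Monotone f ∧ ∑ i, f i = N}.ncard =
      {s : Multiset ℕ | s.card = m ∧ s.sum = N}.ncard := by
  refine Set.BijOn.ncard_eq (f := fun f : Fin m → ℕ => (List.ofFn f : Multiset ℕ)) ⟨?_, ?_, ?_⟩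
  · rintro f ⟨-, hf⟩
    simpa [List.sum_ofFn] using hf
  · rintro f ⟨hf, -⟩ f' ⟨hf', -⟩ heq
    exact List.ofFn_injective ((Multiset.coe_eq_coe.1 heq).eq_of_sortedLE
      (List.sortedLE_ofFn_iff.2 hf) (List.sortedLE_ofFn_iff.2 hf'))
  · rintro s ⟨rfl, rfl⟩
    obtain ⟨f, hf, hfs⟩ : ∃ f : Fin s.card → ℕ, Monotone f ∧ List.ofFn f = s.sort (· ≤ ·) := by
      rw [← s.length_sort (r := (· ≤ ·))]
      exact ⟨(s.sort (· ≤ ·)).get, (s.pairwise_sort _).sortedLE.monotone_get, List.ofFn_get _⟩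
    refine ⟨f, ⟨hf, ?_⟩, ?_⟩
    · rw [← List.sum_ofFn, hfs, ← Multiset.sum_coe, Multiset.sort_eq]
    · simp only [hfs, Multiset.sort_eq]

lemma ncard_multiset_sum_eq (m N : ℕ) :
    {s : Multiset ℕ | s.card = m ∧ s.sum = N}.ncard =
      {p : N.Partition | p.parts.card ≤ m}.ncard := by
  symm
  refine Set.BijOn.ncard_eq
    (f := fun p => p.parts + Multiset.replicate (m - p.parts.card) 0) ⟨?_, ?_, ?_⟩
  · intro p hp
    simp [p.parts_sum, Nat.add_sub_cancel' hp]
  · intro p _ p' _ heq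
    have filter_eq (p : N.Partition) (k : ℕ) :
        (p.parts + Multiset.replicate k 0).filter (· ≠ 0) = p.parts := by
      rw [Multiset.filter_add, Multiset.filter_eq_self.2 fun _ ha => (p.parts_pos ha).ne']
      simp +contextual [Multiset.filter_eq_nil, Multiset.mem_replicate]
    have := congrArg (Multiset.filter (· ≠ 0)) heq
    simp only [filter_eq] at this
    exact Nat.Partition.ext this
  · rintro s ⟨rfl, hsum⟩
    have hs : s.filter (· ≠ 0) + Multiset.replicate (s.count 0) 0 = s := by
      rw [← Multiset.filter_eq', add_comm, Multiset.filter_add_not]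
    have hcard := congrArg Multiset.card hs
    simp only [Multiset.card_add, Multiset.card_replicate] at hcard
    refine ⟨Nat.Partition.ofSums N s hsum, ?_, ?_⟩
    · simp [Nat.Partition.ofSums, Multiset.card_le_card]
    · simp only [Nat.Partition.ofSums]
      rw [show s.card - (s.filter (· ≠ 0)).card = s.count 0 by omega, hs]

lemma card_parts_le {N : ℕ} (p : N.Partition) : p.parts.card ≤ N := by
  simpa [p.parts_sum] using Multiset.card_nsmul_le_sum (s := p.parts) (a := 1) fun _ => p.parts_pos

theorem ncard_mayaDiagrams (q : ℤ) (N : ℕ) :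
    (mayaDiagrams q (N + q * (q - 1) / 2)).ncard = Fintype.card N.Partition := by
  have periodic :
      Function.Periodic (fun q : ℤ => (mayaDiagrams q (N + q * (q - 1) / 2)).ncard) 1 := by
    intro q
    have htriangle : (q + 1) * (q + 1 - 1) / 2 = q * (q - 1) / 2 + q := by
      rw [show (q + 1) * (q + 1 - 1) = q * (q - 1) + q * 2 by ring,
        Int.add_mul_ediv_right _ _ two_ne_zero]
    simp only [htriangle, ← add_assoc, ncard_mayaDiagrams_shift]
  calc (mayaDiagrams q (N + q * (q - 1) / 2)).ncard
      = (mayaDiagrams N (N + N * (N - 1) / 2)).ncard := by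
        have hq := periodic.int_mul_eq q
        have hN := periodic.int_mul_eq N
        simp only [mul_one, Int.cast_id] at hq hN
        exact hq.trans hN.symm
    _ = {p : N.Partition | p.parts.card ≤ N}.ncard := by
        rw [ncard_mayaDiagrams_of_le le_rfl, ncard_staircaseSets, ncard_monotone_sum_eq,
          ncard_multiset_sum_eq]
    _ = Fintype.card N.Partition := by
        rw [Set.eq_univ_of_forall (s := {p : N.Partition | p.parts.card ≤ N}) card_parts_le,
          Set.ncard_univ, Nat.card_eq_fintype_card]

end

theorem stmt_2 (N : ℕ) (ℓ : ℤ) (h : 2 * |ℓ| + 4 > (N : ℤ)) :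
    Vd ℓ (N + ℓ.natAbs * (ℓ.natAbs + 1) / 2) = partitionCount (N : ℤ) := by
  have hbound : N + ℓ.natAbs * (ℓ.natAbs + 1) / 2 <
      ℓ.natAbs * (ℓ.natAbs + 1) / 2 + (2 * ℓ.natAbs + 4) := by
    rw [Int.abs_eq_natAbs] at h
    omega
  have henergy : ((N + ℓ.natAbs * (ℓ.natAbs + 1) / 2 : ℕ) : ℤ) =
      N + ((ℓ.natAbs : ℤ) + 1) * (ℓ.natAbs + 1 - 1) / 2 := by
    push_cast
    rw [add_sub_cancel_right, mul_comm]
  rw [← Vd_natAbs, Vd_eq_ncard_concavePairs, concavePairs_eq_mayaDiagrams hbound, henergy,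
    ncard_mayaDiagrams, partitionCount, if_pos (Int.natCast_nonneg N), Int.toNat_natCast]
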